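/- arXiv:1807.00379 — 2 statements merged into one kernel-verified Lean document; each statement's English description precedes it below -/
import Mathlib

section
/- The cone DD^n_+ of n×n symmetric entrywise nonnegative diagonally dominant matrices equals the conic hull of the matrices (e_i + e_j)(e_i + e_j)^T for 1 ≤ i ≤ j ≤ n, where e_1,…,e_n are the standard basis vectors of R^n. -/
open Matrix Set

noncomputable section

/-- `DDⁿ₊`: symmetric, entrywise nonnegative, diagonally dominant matrices. -/
def DDplus (n : ℕ) : Set (Matrix (Fin n) (Fin n) ℝ) :=
  {A | A.IsSymm ∧ (∀ i j, 0 ≤ A i j) ∧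
    ∀ i : Fin n, ∑ j ∈ Finset.univ.erase i, |A i j| ≤ A i i}

/-- The conic hull: finite nonnegative combinations of elements of `s`. -/
def conicHull {α : Type*} [AddCommMonoid α] [Module ℝ α] (s : Set α) : Set α :=
  {x | ∃ (N : ℕ) (c : Fin N → ℝ) (v : Fin N → α),
    (∀ k, 0 ≤ c k) ∧ (∀ k, v k ∈ s) ∧ x = ∑ k, c k • v k}

/-! The linear map `W ↦ W + diag(W 1)` sends `Eᵢⱼ + Eⱼᵢ` to `(eᵢ + eⱼ)(eᵢ + eⱼ)ᵀ`, also when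
`i = j`. It maps the cone of symmetric nonnegative matrices, which is generated by the
`Eᵢⱼ + Eⱼᵢ`, onto the diagonally dominant cone: the preimage of `A` keeps the off-diagonal entries
and has half the slack `Aᵢᵢ - ∑_{j ≠ i} Aᵢⱼ` on the diagonal. -/

theorem coe_hull_eq_conicHull {α : Type*} [AddCommMonoid α] [Module ℝ α] (s : Set α) :
    (PointedCone.hull ℝ s : Set α) = conicHull s := by
  ext x
  rw [SetLike.mem_coe, Submodule.mem_span_set']
  constructor
  · rintro ⟨N, c, v, rfl⟩
    exact ⟨N, fun k => c k, fun k => v k, fun k => (c k).2, fun k => (v k).2, rfl⟩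
  · rintro ⟨N, c, v, hc, hv, rfl⟩
    exact ⟨N, fun k => ⟨c k, hc k⟩, fun k => ⟨v k, hv k⟩, rfl⟩

theorem setOf_exists_le_eq_range_of_comm {ι α : Type*} [LinearOrder ι] {f : ι → ι → α}
    (hf : ∀ i j, f i j = f j i) :
    {x | ∃ i j, i ≤ j ∧ x = f i j} = range fun p : ι × ι => f p.1 p.2 := by
  ext x
  constructor
  · rintro ⟨i, j, -, rfl⟩
    exact ⟨(i, j), rfl⟩
  · rintro ⟨⟨i, j⟩, rfl⟩
    rcases le_total i j with hij | hji
    · exact ⟨i, j, hij, rfl⟩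
    · exact ⟨j, i, hji, hf i j⟩

section signlessLaplacian

variable {ι R : Type*} [Fintype ι] [DecidableEq ι]

/-- The signless Laplacian `W + diag(W 1)` of a weight matrix `W`, as a linear map. Diagonal
weights (loops) count twice, once as an entry of `W` and once in its row sum. -/
def signlessLaplacian [Semiring R] : Matrix ι ι R →ₗ[R] Matrix ι ι R where
  toFun W := W + diagonal (W *ᵥ 1)
  map_add' V W := by
    rw [add_mulVec, add_add_add_comm]
    exact congrArg (V + W + ·) (diagonal_add _ _).symm
  map_smul' c W := by
    rw [smul_mulVec, diagonal_smul, RingHom.id_apply, smul_add]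

section Semiring

variable [Semiring R]

theorem signlessLaplacian_apply (W : Matrix ι ι R) :
    signlessLaplacian W = W + diagonal (W *ᵥ 1) :=
  rfl

theorem signlessLaplacian_apply_self (W : Matrix ι ι R) (i : ι) :
    signlessLaplacian W i i = 2 * W i i + ∑ j ∈ Finset.univ.erase i, W i j := by
  rw [signlessLaplacian_apply, Matrix.add_apply, diagonal_apply_eq, mulVec, dotProduct_one,
    ← Finset.add_sum_erase _ _ (Finset.mem_univ i), two_mul, add_assoc]

theorem signlessLaplacian_apply_of_ne (W : Matrix ι ι R) {i j : ι} (hij : i ≠ j) :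
    signlessLaplacian W i j = W i j := by
  rw [signlessLaplacian_apply, Matrix.add_apply, diagonal_apply_ne _ hij, add_zero]

theorem isSymm_signlessLaplacian {W : Matrix ι ι R} (hW : W.IsSymm) :
    (signlessLaplacian W).IsSymm :=
  hW.add (isSymm_diagonal _)

theorem signlessLaplacian_single_add_single (i j : ι) :
    signlessLaplacian (single i j (1 : R) + single j i 1) =
      vecMulVec (Pi.single i 1 + Pi.single j 1) (Pi.single i 1 + Pi.single j 1) := by
  have diagonal_rowSums : Matrix.diagonal ((single i j (1 : R) + single j i 1) *ᵥ 1) =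
      single i i 1 + single j j 1 := by
    simp only [add_mulVec, single_mulVec_eq, Pi.one_apply, mul_one, one_smul, ← diagonal_single]
    exact (diagonal_add _ _).symm
  rw [signlessLaplacian_apply, diagonal_rowSums]
  simp only [add_vecMulVec, vecMulVec_add, ← single_eq_single_vecMulVec_single]
  abel

theorem signlessLaplacian_nonneg [PartialOrder R] [IsOrderedRing R] {W : Matrix ι ι R}
    (hW : ∀ i j, 0 ≤ W i j) (i j : ι) : 0 ≤ signlessLaplacian W i j := by
  rcases eq_or_ne i j with rfl | hij
  · rw [signlessLaplacian_apply_self]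
    exact add_nonneg (mul_nonneg zero_le_two (hW i i)) (Finset.sum_nonneg fun j _ => hW i j)
  · rw [signlessLaplacian_apply_of_ne W hij]
    exact hW i j

end Semiring

theorem sum_abs_signlessLaplacian_le [Ring R] [LinearOrder R] [IsOrderedRing R]
    {W : Matrix ι ι R} (hW : ∀ i j, 0 ≤ W i j) (i : ι) :
    ∑ j ∈ Finset.univ.erase i, |signlessLaplacian W i j| ≤ signlessLaplacian W i i := by
  calc ∑ j ∈ Finset.univ.erase i, |signlessLaplacian W i j|
      = ∑ j ∈ Finset.univ.erase i, W i j := Finset.sum_congr rfl fun j hj => by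
        rw [signlessLaplacian_apply_of_ne W (Finset.ne_of_mem_erase hj).symm,
          abs_of_nonneg (hW i j)]
    _ ≤ 2 * W i i + ∑ j ∈ Finset.univ.erase i, W i j :=
        le_add_of_nonneg_left (mul_nonneg zero_le_two (hW i i))
    _ = signlessLaplacian W i i := (signlessLaplacian_apply_self W i).symm

/-- The weight matrix whose signless Laplacian is `A` (when `2 ≠ 0`): it has the off-diagonal
entries of `A` and, on the diagonal, half the amount by which `A i i` exceeds the sum of the rest
of its row. -/
def signlessWeights [DivisionRing R] (A : Matrix ι ι R) : Matrix ι ι R :=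
  of fun i j => if i = j then (A i i - ∑ k ∈ Finset.univ.erase i, A i k) / 2 else A i j

section DivisionRing

variable [DivisionRing R]

theorem signlessWeights_apply_self (A : Matrix ι ι R) (i : ι) :
    signlessWeights A i i = (A i i - ∑ k ∈ Finset.univ.erase i, A i k) / 2 :=
  if_pos rfl

theorem signlessWeights_apply_of_ne (A : Matrix ι ι R) {i j : ι} (hij : i ≠ j) :
    signlessWeights A i j = A i j :=
  if_neg hij

theorem isSymm_signlessWeights {A : Matrix ι ι R} (hA : A.IsSymm) :
    (signlessWeights A).IsSymm := by
  refine IsSymm.ext fun i j => ?_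
  rcases eq_or_ne i j with rfl | hij
  · rfl
  · rw [signlessWeights_apply_of_ne A hij, signlessWeights_apply_of_ne A hij.symm, hA.apply]

theorem signlessLaplacian_signlessWeights [NeZero (2 : R)] (A : Matrix ι ι R) :
    signlessLaplacian (signlessWeights A) = A := by
  ext i j
  rcases eq_or_ne i j with rfl | hij
  · have offDiag : ∑ j ∈ Finset.univ.erase i, signlessWeights A i j =
        ∑ j ∈ Finset.univ.erase i, A i j :=
      Finset.sum_congr rfl fun j hj =>
        signlessWeights_apply_of_ne A (Finset.ne_of_mem_erase hj).symm
    rw [signlessLaplacian_apply_self, signlessWeights_apply_self, offDiag, two_mul, add_halves,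
      sub_add_cancel]
  · rw [signlessLaplacian_apply_of_ne _ hij, signlessWeights_apply_of_ne A hij]

theorem signlessWeights_nonneg [LinearOrder R] [IsStrictOrderedRing R] {A : Matrix ι ι R}
    (hA : ∀ i j, i ≠ j → 0 ≤ A i j)
    (hdom : ∀ i, ∑ j ∈ Finset.univ.erase i, |A i j| ≤ A i i) (i j : ι) :
    0 ≤ signlessWeights A i j := by
  rcases eq_or_ne i j with rfl | hij
  · rw [signlessWeights_apply_self]
    have rowSum_le : ∑ j ∈ Finset.univ.erase i, A i j ≤ A i i :=
      (Finset.sum_le_sum fun j _ => le_abs_self (A i j)).trans (hdom i)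
    exact div_nonneg (sub_nonneg.2 rowSum_le) zero_le_two
  · rw [signlessWeights_apply_of_ne A hij]
    exact hA i j hij

end DivisionRing

end signlessLaplacian

/-- The cone of symmetric, entrywise nonnegative matrices. -/
def nonnegSymmCone (ι R : Type*) [Semiring R] [PartialOrder R] [IsOrderedRing R] :
    PointedCone R (Matrix ι ι R) where
  carrier := {W | W.IsSymm ∧ ∀ i j, 0 ≤ W i j}
  zero_mem' := ⟨isSymm_zero, fun _ _ => le_rfl⟩
  add_mem' hV hW := ⟨hV.1.add hW.1, fun i j => add_nonneg (hV.2 i j) (hW.2 i j)⟩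
  smul_mem' c _ hW := ⟨hW.1.smul (c : R), fun i j => mul_nonneg c.2 (hW.2 i j)⟩

theorem single_add_single_mem_nonnegSymmCone {ι R : Type*} [DecidableEq ι] [Semiring R]
    [PartialOrder R] [IsOrderedRing R] (i j : ι) :
    single i j (1 : R) + single j i 1 ∈ nonnegSymmCone ι R := by
  have single_nonneg (i j a b : ι) : 0 ≤ single i j (1 : R) a b := by
    rw [single_apply]
    split_ifs
    exacts [zero_le_one, le_rfl]
  refine ⟨?_, fun a b => add_nonneg (single_nonneg i j a b) (single_nonneg j i a b)⟩
  rw [IsSymm, transpose_add, transpose_single, transpose_single, add_comm]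

theorem eq_sum_smul_single_add_single_of_isSymm {ι R : Type*} [Fintype ι] [DecidableEq ι]
    [DivisionRing R] [NeZero (2 : R)] {W : Matrix ι ι R} (hW : W.IsSymm) :
    W = ∑ i, ∑ j, (W i j / 2) • (single i j (1 : R) + single j i 1) := by
  have halves_eq_sum : of (fun i j => W i j / 2) = ∑ i, ∑ j, single i j (W i j / 2) :=
    (sum_sum_single _).symm
  calc W = of (fun i j => W i j / 2) + (of fun i j => W i j / 2)ᵀ := by
        ext i j
        rw [Matrix.add_apply, transpose_apply, of_apply, of_apply, hW.apply, add_halves]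
    _ = _ := by
        simp only [halves_eq_sum, transpose_sum, transpose_single, ← Finset.sum_add_distrib,
          smul_add, smul_single, smul_eq_mul, mul_one]

theorem nonnegSymmCone_eq_hull {ι 𝕜 : Type*} [Finite ι] [DecidableEq ι] [DivisionRing 𝕜]
    [LinearOrder 𝕜] [IsStrictOrderedRing 𝕜] :
    nonnegSymmCone ι 𝕜 =
      PointedCone.hull 𝕜 (range fun p : ι × ι => single p.1 p.2 1 + single p.2 p.1 1) := by
  refine le_antisymm ?_ (Submodule.span_le.2 ?_)
  · rintro W ⟨hsymm, hnonneg⟩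
    have := Fintype.ofFinite ι
    rw [eq_sum_smul_single_add_single_of_isSymm hsymm]
    exact sum_mem fun i _ => sum_mem fun j _ => PointedCone.smul_mem _
      (div_nonneg (hnonneg i j) zero_le_two) (PointedCone.subset_hull ⟨(i, j), rfl⟩)
  · rintro _ ⟨⟨i, j⟩, rfl⟩
    exact single_add_single_mem_nonnegSymmCone i j

section OrderedDivisionRing

variable {ι 𝕜 : Type*} [Fintype ι] [DecidableEq ι] [DivisionRing 𝕜] [LinearOrder 𝕜]
  [IsStrictOrderedRing 𝕜]

theorem mem_map_signlessLaplacian_nonnegSymmCone {A : Matrix ι ι 𝕜} :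
    A ∈ (nonnegSymmCone ι 𝕜).map signlessLaplacian ↔
      A.IsSymm ∧ (∀ i j, 0 ≤ A i j) ∧ ∀ i, ∑ j ∈ Finset.univ.erase i, |A i j| ≤ A i i := by
  rw [PointedCone.mem_map]
  constructor
  · rintro ⟨W, ⟨hsymm, hnonneg⟩, rfl⟩
    exact ⟨isSymm_signlessLaplacian hsymm, signlessLaplacian_nonneg hnonneg,
      sum_abs_signlessLaplacian_le hnonneg⟩
  · rintro ⟨hsymm, hnonneg, hdom⟩
    exact ⟨signlessWeights A,
      ⟨isSymm_signlessWeights hsymm, signlessWeights_nonneg (fun i j _ => hnonneg i j) hdom⟩,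
      signlessLaplacian_signlessWeights A⟩

theorem map_signlessLaplacian_nonnegSymmCone_eq_hull :
    (nonnegSymmCone ι 𝕜).map signlessLaplacian =
      PointedCone.hull 𝕜 (range fun p : ι × ι =>
        vecMulVec (Pi.single p.1 (1 : 𝕜) + Pi.single p.2 1)
          (Pi.single p.1 (1 : 𝕜) + Pi.single p.2 1)) := by
  rw [nonnegSymmCone_eq_hull, PointedCone.map, Submodule.map_span, ← range_comp]
  congr! 3 with p
  exact signlessLaplacian_single_add_single p.1 p.2

end OrderedDivisionRing

theorem DDplus_eq_conicHull_general (ι 𝕜 : Type*) [Fintype ι] [DecidableEq ι] [DivisionRing 𝕜]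
    [LinearOrder 𝕜] [IsStrictOrderedRing 𝕜] :
    {A : Matrix ι ι 𝕜 | A.IsSymm ∧ (∀ i j, 0 ≤ A i j) ∧
      ∀ i, ∑ j ∈ Finset.univ.erase i, |A i j| ≤ A i i} =
    (PointedCone.hull 𝕜 (range fun p : ι × ι =>
      vecMulVec (Pi.single p.1 (1 : 𝕜) + Pi.single p.2 1)
        (Pi.single p.1 (1 : 𝕜) + Pi.single p.2 1) : Set (Matrix ι ι 𝕜)) :
      Set (Matrix ι ι 𝕜)) := by
  rw [← map_signlessLaplacian_nonnegSymmCone_eq_hull]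
  ext A
  exact mem_map_signlessLaplacian_nonnegSymmCone.symm

/-- `DDⁿ₊` is the conic hull of the matrices `(eᵢ+eⱼ)(eᵢ+eⱼ)ᵀ` for `1 ≤ i ≤ j ≤ n`. -/
theorem DDplus_eq_conicHull (n : ℕ) :
    DDplus n = conicHull {M | ∃ i j : Fin n, i ≤ j ∧
      M = vecMulVec (Pi.single i (1 : ℝ) + Pi.single j 1)
            (Pi.single i (1 : ℝ) + Pi.single j 1)} := by
  rw [setOf_exists_le_eq_range_of_comm fun i j => by rw [add_comm], ← coe_hull_eq_conicHull]
  exact DDplus_eq_conicHull_general (Fin n) ℝ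

end
end

section
/- Let G and G' be graphs on vertex sets {1,…,t} and {1,…,t'} with edge sets E and E', and let U ∈ R^{t×n} and U' ∈ R^{t'×n} have nonnegative entries with each row summing to 1. Then SDD^G_+(U) = SDD^{G'}_+(U') if and only if seg(G,U) = seg(G',U'). -/
open Matrix Set

noncomputable section

/-- The embedding `ι_{ij} : S² → Sⁿ` placing a 2×2 symmetric matrix into
rows/columns `i, j` with zeros elsewhere. -/
def iota {n : ℕ} (i j : Fin n) (S : Matrix (Fin 2) (Fin 2) ℝ) :
    Matrix (Fin n) (Fin n) ℝ :=
  Matrix.of fun r s =>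
    (if r = i ∧ s = i then S 0 0 else 0) +
    (if r = i ∧ s = j then S 0 1 else 0) +
    (if r = j ∧ s = i then S 1 0 else 0) +
    (if r = j ∧ s = j then S 1 1 else 0)

/-- The cone `SDDⁿ = Σ_{i<j} ι_{ij}(S²₊)` of scaled diagonally dominant matrices. -/
def SDD (n : ℕ) : Set (Matrix (Fin n) (Fin n) ℝ) :=
  {X | ∃ S : Fin n → Fin n → Matrix (Fin 2) (Fin 2) ℝ,
    (∀ i j : Fin n, (S i j).PosSemidef) ∧
    X = ∑ i : Fin n, ∑ j : Fin n, if i < j then iota i j (S i j) else 0}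

/-- `Nⁿ`: symmetric entrywise nonnegative matrices. -/
def NonnegMat (n : ℕ) : Set (Matrix (Fin n) (Fin n) ℝ) :=
  {X | X.IsSymm ∧ ∀ i j, 0 ≤ X i j}

/-- Dual cone within the space of symmetric matrices, w.r.t. the trace inner product. -/
def dualCone {n : ℕ} (C : Set (Matrix (Fin n) (Fin n) ℝ)) :
    Set (Matrix (Fin n) (Fin n) ℝ) :=
  {Y | Y.IsSymm ∧ ∀ X ∈ C, 0 ≤ (X * Y).trace}

open scoped Classical in
/-- `SDD^G = Σ_{{i,j}∈E} ι_{ij}(S²₊)` (equal to `{0}` if `E = ∅`). -/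
def SDDG {t : ℕ} (G : SimpleGraph (Fin t)) : Set (Matrix (Fin t) (Fin t) ℝ) :=
  {X | ∃ S : Fin t → Fin t → Matrix (Fin 2) (Fin 2) ℝ,
    (∀ i j : Fin t, (S i j).PosSemidef) ∧
    X = ∑ i : Fin t, ∑ j : Fin t, if i < j ∧ G.Adj i j then iota i j (S i j) else 0}

/-- `SDD^G₊ = SDD^G ∩ Nᵗ`. -/
def SDDGplus {t : ℕ} (G : SimpleGraph (Fin t)) : Set (Matrix (Fin t) (Fin t) ℝ) :=
  SDDG G ∩ NonnegMat t

/-- `SDD^G₊(U) = Uᵀ (SDD^G₊) U`. -/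
def SDDGplusU {t n : ℕ} (G : SimpleGraph (Fin t)) (U : Matrix (Fin t) (Fin n) ℝ) :
    Set (Matrix (Fin n) (Fin n) ℝ) :=
  {X | ∃ Y ∈ SDDGplus G, X = Uᵀ * Y * U}

/-- `seg(G,U) = ∪_{{i,j}∈E} [uᵢ, uⱼ]`. -/
def seg {t n : ℕ} (G : SimpleGraph (Fin t)) (U : Matrix (Fin t) (Fin n) ℝ) :
    Set (Fin n → ℝ) :=
  {v | ∃ i j : Fin t, G.Adj i j ∧ v ∈ segment ℝ (U i) (U j)}

/-!
Write `rankOneCone V` for the convex cone generated by the matrices `v vᵀ`, `v ∈ V`. A `2 × 2`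
positive semidefinite matrix with nonnegative off-diagonal entry is a sum of two matrices `p pᵀ`
with `p ≥ 0`, so `SDD^G₊` is the cone over the union of the segments `[eᵢ, eⱼ]`, `{i,j} ∈ E`, and
the congruence `X ↦ Uᵀ X U` carries it onto `rankOneCone (seg G U)`.

Conversely, `v vᵀ` spans an extreme ray of the positive semidefinite cone. If it lies in
`rankOneCone V`, then some nonzero multiple of `v` lies in `V`; on an affine hyperplane missing the
origin that multiple is `v` itself, so there the cone determines `V`.
-/

section Congruence

variable {m n R : Type*} [Fintype m] [CommSemiring R]

/-- The congruence `X ↦ Uᵀ X U` as a linear map; `U` need not be square or invertible. -/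
@[simps]
def congruence (U : Matrix m n R) : Matrix m m R →ₗ[R] Matrix n n R where
  toFun X := Uᵀ * X * U
  map_add' X Y := by rw [Matrix.mul_add, Matrix.add_mul]
  map_smul' a X := by rw [Matrix.mul_smul, Matrix.smul_mul, RingHom.id_apply]

lemma congruence_vecMulVec_self (U : Matrix m n R) (v : m → R) :
    congruence U (vecMulVec v v) = vecMulVec (v ᵥ* U) (v ᵥ* U) := by
  rw [congruence_apply, mul_vecMulVec, vecMulVec_mul, mulVec_transpose]

lemma dotProduct_vecMulVec_self_mulVec (v x : m → R) :
    x ⬝ᵥ vecMulVec v v *ᵥ x = (v ⬝ᵥ x) ^ 2 := by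
  rw [vecMulVec_mulVec, op_smul_eq_smul, dotProduct_smul, smul_eq_mul, dotProduct_comm x, sq]

end Congruence

section RankOneCone

variable {m n 𝕜 : Type*} [Fintype m] [Field 𝕜] [LinearOrder 𝕜] [IsStrictOrderedRing 𝕜]

/-- The convex cone generated by the rank-one matrices `v vᵀ` with `v ∈ V`. For `V` the set of all
entrywise nonnegative vectors it is the completely positive cone. -/
def rankOneCone (V : Set (n → 𝕜)) : PointedCone 𝕜 (Matrix n n 𝕜) :=
  PointedCone.hull 𝕜 ((fun v => vecMulVec v v) '' V)

lemma vecMulVec_self_mem_rankOneCone {V : Set (n → 𝕜)} {v : n → 𝕜} (hv : v ∈ V) :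
    vecMulVec v v ∈ rankOneCone V :=
  PointedCone.subset_hull (mem_image_of_mem _ hv)

lemma rankOneCone_mono {V W : Set (n → 𝕜)} (h : V ⊆ W) : rankOneCone V ≤ rankOneCone W :=
  Submodule.span_mono (image_mono h)

lemma vecMulVec_smul_self_mem_rankOneCone {V : Set (n → 𝕜)} {v : n → 𝕜} (hv : v ∈ V) (a : 𝕜) :
    vecMulVec (a • v) (a • v) ∈ rankOneCone V := by
  rw [smul_vecMulVec, vecMulVec_smul, smul_smul]
  exact (rankOneCone V).smul_mem (mul_self_nonneg a) (vecMulVec_self_mem_rankOneCone hv)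

lemma vecMulVec_self_mem_rankOneCone_of_segment_subset {V : Set (n → 𝕜)} {x y : n → 𝕜}
    (hV : segment 𝕜 x y ⊆ V) {a b : 𝕜} (ha : 0 ≤ a) (hb : 0 ≤ b) :
    vecMulVec (a • x + b • y) (a • x + b • y) ∈ rankOneCone V := by
  obtain hab | hab := (add_nonneg ha hb).eq_or_lt
  · obtain ⟨rfl, rfl⟩ := (add_eq_zero_iff_of_nonneg ha hb).mp hab.symm
    simp
  · have hmem : (a / (a + b)) • x + (b / (a + b)) • y ∈ V :=
      hV ⟨a / (a + b), b / (a + b), by positivity, by positivity, by field_simp, rfl⟩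
    simpa only [smul_add, smul_smul, mul_div_cancel₀ _ hab.ne'] using
      vecMulVec_smul_self_mem_rankOneCone hmem (a + b)

lemma map_congruence_rankOneCone (U : Matrix m n 𝕜) (V : Set (m → 𝕜)) :
    (rankOneCone V).map (congruence U) = rankOneCone ((· ᵥ* U) '' V) := by
  rw [rankOneCone, rankOneCone, PointedCone.map, PointedCone.hull, Submodule.map_span,
    image_image, image_image]
  simp only [LinearMap.coe_restrictScalars, congruence_vecMulVec_self]

section ExtremeRay

lemma exists_eq_smul_of_forall_dotProduct_eq_zero {v w : m → 𝕜}
    (h : ∀ x, v ⬝ᵥ x = 0 → w ⬝ᵥ x = 0) : ∃ a : 𝕜, w = a • v := by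
  set a := v ⬝ᵥ w / v ⬝ᵥ v
  have hv : v ⬝ᵥ (w - a • v) = 0 := by
    rw [dotProduct_sub, dotProduct_smul, smul_eq_mul, div_mul_cancel_of_imp, sub_self]
    intro hvv
    rw [dotProduct_self_eq_zero.mp hvv, zero_dotProduct]
  have hself : (w - a • v) ⬝ᵥ (w - a • v) = 0 := by
    rw [sub_dotProduct w, smul_dotProduct, h _ hv, hv, smul_zero, sub_zero]
  exact ⟨a, sub_eq_zero.mp (dotProduct_self_eq_zero.mp hself)⟩

lemma dotProduct_mulVec_nonneg_of_mem_rankOneCone {V : Set (m → 𝕜)} {X : Matrix m m 𝕜}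
    (hX : X ∈ rankOneCone V) (x : m → 𝕜) : 0 ≤ x ⬝ᵥ X *ᵥ x := by
  induction hX using Submodule.span_induction with
  | mem X hX =>
    obtain ⟨v, -, rfl⟩ := hX
    rw [dotProduct_vecMulVec_self_mulVec]
    positivity
  | zero => simp
  | add X Y _ _ hX hY =>
    rw [add_mulVec, dotProduct_add]
    exact add_nonneg hX hY
  | smul r X _ hX =>
    rw [Nonneg.mk_smul, smul_mulVec, dotProduct_smul]
    exact smul_nonneg r.2 hX

lemma exists_smul_mem_of_dotProduct_mulVec_eq_zero {V : Set (m → 𝕜)} {X : Matrix m m 𝕜}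
    (hX : X ∈ rankOneCone V) (hX₀ : X ≠ 0) {v : m → 𝕜}
    (h : ∀ x, v ⬝ᵥ x = 0 → x ⬝ᵥ X *ᵥ x = 0) : ∃ a : 𝕜, a ≠ 0 ∧ a • v ∈ V := by
  induction hX using Submodule.span_induction with
  | mem X hX =>
    obtain ⟨w, hw, rfl⟩ := hX
    simp only [dotProduct_vecMulVec_self_mulVec, sq_eq_zero_iff] at h
    obtain ⟨a, rfl⟩ := exists_eq_smul_of_forall_dotProduct_eq_zero h
    refine ⟨a, ?_, hw⟩
    rintro rfl
    simp at hX₀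
  | zero => exact absurd rfl hX₀
  | add X Y hX hY ihX ihY =>
    have hXY x (hx : v ⬝ᵥ x = 0) : x ⬝ᵥ X *ᵥ x = 0 ∧ x ⬝ᵥ Y *ᵥ x = 0 := by
      have hsum := h x hx
      rwa [add_mulVec, dotProduct_add, add_eq_zero_iff_of_nonneg
        (dotProduct_mulVec_nonneg_of_mem_rankOneCone hX x)
        (dotProduct_mulVec_nonneg_of_mem_rankOneCone hY x)] at hsum
    by_cases hX' : X = 0
    · exact ihY (by simpa [hX'] using hX₀) fun x hx => (hXY x hx).2
    · exact ihX hX' fun x hx => (hXY x hx).1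
  | smul r X _ ih =>
    obtain ⟨hr, hX'⟩ := smul_ne_zero_iff.mp hX₀
    refine ih hX' fun x hx => ?_
    have hrx := h x hx
    rw [Nonneg.mk_smul, smul_mulVec, dotProduct_smul, smul_eq_mul] at hrx
    exact (mul_eq_zero.mp hrx).resolve_left (Subtype.coe_ne_coe.mpr hr)

lemma exists_smul_mem_of_vecMulVec_self_mem_rankOneCone {ι : Type*} [Finite ι] {V : Set (ι → 𝕜)}
    {v : ι → 𝕜} (hv : v ≠ 0) (h : vecMulVec v v ∈ rankOneCone V) :
    ∃ a : 𝕜, a ≠ 0 ∧ a • v ∈ V := by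
  cases nonempty_fintype ι
  refine exists_smul_mem_of_dotProduct_mulVec_eq_zero h (by simpa using hv) fun x hx => ?_
  rw [dotProduct_vecMulVec_self_mulVec, hx, sq, zero_mul]

lemma rankOneCone_le_rankOneCone_iff {V W : Set (m → 𝕜)} {c : m → 𝕜}
    (hV : ∀ v ∈ V, v ⬝ᵥ c = 1) (hW : ∀ w ∈ W, w ⬝ᵥ c = 1) :
    rankOneCone V ≤ rankOneCone W ↔ V ⊆ W := by
  refine ⟨fun h v hv => ?_, rankOneCone_mono⟩
  have hv₀ : v ≠ 0 := by
    rintro rfl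
    simpa using hV 0 hv
  obtain ⟨a, -, ha⟩ := exists_smul_mem_of_vecMulVec_self_mem_rankOneCone hv₀
    (h (vecMulVec_self_mem_rankOneCone hv))
  have ha₁ : a = 1 := by simpa [hV v hv] using hW _ ha
  rwa [ha₁, one_smul] at ha

lemma rankOneCone_inj {V W : Set (m → 𝕜)} {c : m → 𝕜}
    (hV : ∀ v ∈ V, v ⬝ᵥ c = 1) (hW : ∀ w ∈ W, w ⬝ᵥ c = 1) :
    rankOneCone V = rankOneCone W ↔ V = W := by
  rw [le_antisymm_iff, subset_antisymm_iff, rankOneCone_le_rankOneCone_iff hV hW,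
    rankOneCone_le_rankOneCone_iff hW hV]

end ExtremeRay

end RankOneCone

section Segments

variable {t n : ℕ} {G : SimpleGraph (Fin t)}

lemma segment_subset_seg (U : Matrix (Fin t) (Fin n) ℝ) {i j : Fin t} (hij : G.Adj i j) :
    segment ℝ (U i) (U j) ⊆ seg G U :=
  fun _ hv => ⟨i, j, hij, hv⟩

lemma one_apply_eq_single {ι R : Type*} [DecidableEq ι] [Zero R] [One R] (i : ι) :
    (1 : Matrix ι ι R) i = Pi.single i 1 :=
  funext fun _ => one_eq_pi_single

lemma exists_lt_of_mem_seg {U : Matrix (Fin t) (Fin n) ℝ} {v : Fin n → ℝ} (hv : v ∈ seg G U) :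
    ∃ i j : Fin t, i < j ∧ G.Adj i j ∧ v ∈ segment ℝ (U i) (U j) := by
  obtain ⟨i, j, hij, hv⟩ := hv
  obtain hlt | hlt := hij.ne.lt_or_gt
  · exact ⟨i, j, hlt, hij, hv⟩
  · exact ⟨j, i, hlt, hij.symm, segment_symm ℝ (U i) (U j) ▸ hv⟩

lemma nonneg_of_mem_seg {U : Matrix (Fin t) (Fin n) ℝ} (hU : ∀ i j, 0 ≤ U i j) {v : Fin n → ℝ}
    (hv : v ∈ seg G U) : 0 ≤ v := by
  obtain ⟨i, j, -, hv⟩ := hv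
  exact (convex_Ici (𝕜 := ℝ) (0 : Fin n → ℝ)).segment_subset
    (mem_Ici.mpr (hU i)) (mem_Ici.mpr (hU j)) hv

lemma dotProduct_eq_one_of_mem_seg {U : Matrix (Fin t) (Fin n) ℝ} {c : Fin n → ℝ}
    (hU : U *ᵥ c = 1) {v : Fin n → ℝ} (hv : v ∈ seg G U) : v ⬝ᵥ c = 1 := by
  obtain ⟨i, j, -, a, b, -, -, hab, rfl⟩ := hv
  have hrow k : U k ⬝ᵥ c = 1 := congrFun hU k
  simp [add_dotProduct, hrow, hab]

lemma image_vecMul_seg {s : ℕ} (G : SimpleGraph (Fin t)) (A : Matrix (Fin t) (Fin s) ℝ)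
    (U : Matrix (Fin s) (Fin n) ℝ) : (· ᵥ* U) '' seg G A = seg G (A * U) := by
  have himage i j : (· ᵥ* U) '' segment ℝ (A i) (A j) = segment ℝ ((A * U) i) ((A * U) j) :=
    image_segment ℝ U.vecMulLinear.toAffineMap (A i) (A j)
  ext v
  constructor
  · rintro ⟨w, ⟨i, j, hij, hw⟩, rfl⟩
    exact ⟨i, j, hij, himage i j ▸ mem_image_of_mem _ hw⟩
  · rintro ⟨i, j, hij, hv⟩
    obtain ⟨w, hw, rfl⟩ := (himage i j).ge hv
    exact ⟨w, ⟨i, j, hij, hw⟩, rfl⟩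

end Segments

section ScaledDiagonallyDominant

variable {t n : ℕ}

lemma exists_nonneg_eq_vecMulVec_add_vecMulVec {S : Matrix (Fin 2) (Fin 2) ℝ}
    (hS : S.PosSemidef) (h₀₁ : 0 ≤ S 0 1) :
    ∃ p q : Fin 2 → ℝ, 0 ≤ p ∧ 0 ≤ q ∧ S = vecMulVec p p + vecMulVec q q := by
  have h₀₀ : 0 ≤ S 0 0 := hS.diag_nonneg
  have h₁₀ : S 1 0 = S 0 1 := by simpa using hS.isHermitian.apply 0 1
  have hdet : S 0 1 ^ 2 ≤ S 1 1 * S 0 0 := by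
    have := hS.det_nonneg
    rw [det_fin_two, h₁₀] at this
    linarith
  have hschur : 0 ≤ S 1 1 - S 0 1 ^ 2 / S 0 0 :=
    sub_nonneg.mpr (div_le_of_le_mul₀ h₀₀ hS.diag_nonneg hdet)
  have hcross : √(S 0 0) * (S 0 1 / √(S 0 0)) = S 0 1 := by
    refine mul_div_cancel_of_imp' fun h => ?_
    rw [(Real.sqrt_eq_zero h₀₀).mp h, mul_zero] at hdet
    exact pow_eq_zero_iff two_ne_zero |>.mp (hdet.antisymm (sq_nonneg _))
  -- If `S 0 0 = 0`, then `S 0 1 = 0` and the junk value `0` of the division is the right one.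
  refine ⟨![√(S 0 0), S 0 1 / √(S 0 0)], ![0, √(S 1 1 - S 0 1 ^ 2 / S 0 0)], ?_, ?_, ?_⟩
  · exact Fin.forall_fin_two.mpr ⟨Real.sqrt_nonneg _, div_nonneg h₀₁ (Real.sqrt_nonneg _)⟩
  · exact Fin.forall_fin_two.mpr ⟨le_rfl, Real.sqrt_nonneg _⟩
  · ext k l
    fin_cases k <;> fin_cases l
    · simp [h₀₀]
    · simp [hcross]
    · simp [h₁₀, mul_comm, hcross]
    · simp [hschur, ← sq, div_pow, h₀₀]

lemma iota_eq_congruence (i j : Fin t) (S : Matrix (Fin 2) (Fin 2) ℝ) :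
    iota i j S = congruence (of ![Pi.single i 1, Pi.single j 1]) S := by
  ext r s
  simp only [iota, ite_and, of_apply, congruence_apply, mul_apply, transpose_apply, cons_val',
    Pi.single_apply, cons_val_fin_one, Fin.sum_univ_two, cons_val_zero, cons_val_one, ite_mul,
    mul_ite, one_mul, mul_one, zero_mul, mul_zero]
  split_ifs <;> simp [add_comm, add_left_comm]

lemma iota_vecMulVec_self (i j : Fin t) (p : Fin 2 → ℝ) :
    iota i j (vecMulVec p p) = vecMulVec (p 0 • Pi.single i 1 + p 1 • Pi.single j 1)
      (p 0 • Pi.single i 1 + p 1 • Pi.single j 1) := by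
  rw [iota_eq_congruence, congruence_vecMulVec_self]
  have hcomb : p ᵥ* of ![Pi.single i 1, Pi.single j 1] =
      p 0 • Pi.single i 1 + p 1 • Pi.single j 1 := by
    rw [vecMul_eq_sum, Fin.sum_univ_two]
    rfl
  rw [hcomb]

open scoped Classical in
lemma sum_iota_apply {G : SimpleGraph (Fin t)} (S : Fin t → Fin t → Matrix (Fin 2) (Fin 2) ℝ)
    {r s : Fin t} (hlt : r < s) (hadj : G.Adj r s) :
    (∑ i, ∑ j, if i < j ∧ G.Adj i j then iota i j (S i j) else 0) r s = S r s 0 1 := by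
  have hentry i j : (if i < j ∧ G.Adj i j then iota i j (S i j) else 0) r s =
      if i = r then if j = s then S r s 0 1 else 0 else 0 := by
    by_cases h : i < j ∧ G.Adj i j
    · simp only [h, and_self, if_true, iota, of_apply]
      grind
    · simp only [h, if_false, Matrix.zero_apply]
      grind
  simp [Matrix.sum_apply, hentry]

/-- The set `SDD^G₊ = SDDGplus G`, bundled as a pointed cone so that it can be compared with the
span `rankOneCone (seg G 1)`. -/
def SDDGplusCone (G : SimpleGraph (Fin t)) : PointedCone ℝ (Matrix (Fin t) (Fin t) ℝ) where
  carrier := SDDGplus G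
  zero_mem' := by
    refine ⟨⟨0, fun _ _ => PosSemidef.zero, ?_⟩, isSymm_zero, fun _ _ => le_rfl⟩
    simp [iota_eq_congruence]
  add_mem' := by
    rintro _ _ ⟨⟨S, hS, rfl⟩, hXsymm, hXnn⟩ ⟨⟨T, hT, rfl⟩, hYsymm, hYnn⟩
    refine ⟨⟨S + T, fun i j => (hS i j).add (hT i j), ?_⟩, hXsymm.add hYsymm,
      fun i j => add_nonneg (hXnn i j) (hYnn i j)⟩
    simp only [iota_eq_congruence, Pi.add_apply, map_add, ← Finset.sum_add_distrib, ite_add_ite,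
      add_zero]
  smul_mem' := by
    rintro r _ ⟨⟨S, hS, rfl⟩, hsymm, hnn⟩
    refine ⟨⟨r • S, fun i j => (hS i j).smul r.2, ?_⟩, hsymm.smul _,
      fun i j => mul_nonneg r.2 (hnn i j)⟩
    simp only [iota_eq_congruence, Pi.smul_apply, Finset.smul_sum, smul_ite, smul_zero,
      LinearMap.map_smul_of_tower]

lemma mem_SDDGplusCone {G : SimpleGraph (Fin t)} {X : Matrix (Fin t) (Fin t) ℝ} :
    X ∈ SDDGplusCone G ↔ X ∈ SDDGplus G :=
  Iff.rfl

lemma iota_mem_SDDG {G : SimpleGraph (Fin t)} {i j : Fin t} (hlt : i < j) (hij : G.Adj i j)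
    {S : Matrix (Fin 2) (Fin 2) ℝ} (hS : S.PosSemidef) : iota i j S ∈ SDDG G := by
  classical
  refine ⟨fun r s => if r = i ∧ s = j then S else 0, fun r s => ?_, ?_⟩
  · dsimp only
    split_ifs
    exacts [hS, PosSemidef.zero]
  · have hterm r s : (if r < s ∧ G.Adj r s then iota r s (if r = i ∧ s = j then S else 0) else 0) =
        if r = i then if s = j then iota i j S else 0 else 0 := by
      by_cases h : r = i ∧ s = j
      · obtain ⟨rfl, rfl⟩ := h
        simp [hlt, hij]
      · simp [h, ← ite_and, iota_eq_congruence]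
    simp [hterm]

lemma vecMulVec_self_mem_SDDGplus {G : SimpleGraph (Fin t)} {v : Fin t → ℝ} (hv : v ∈ seg G 1) :
    vecMulVec v v ∈ SDDGplus G := by
  have hv₀ : 0 ≤ v := nonneg_of_mem_seg (fun i j => by rw [one_apply]; positivity) hv
  refine ⟨?_, transpose_vecMulVec v v, fun i j => mul_nonneg (hv₀ i) (hv₀ j)⟩
  obtain ⟨i, j, hlt, hij, a, b, -, -, -, rfl⟩ := exists_lt_of_mem_seg hv
  rw [one_apply_eq_single, one_apply_eq_single]
  exact iota_vecMulVec_self i j ![a, b] ▸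
    iota_mem_SDDG hlt hij (posSemidef_vecMulVec_self_star ![a, b])

lemma iota_mem_rankOneCone_seg_one {G : SimpleGraph (Fin t)} {i j : Fin t} (hij : G.Adj i j)
    {S : Matrix (Fin 2) (Fin 2) ℝ} (hS : S.PosSemidef) (h₀₁ : 0 ≤ S 0 1) :
    iota i j S ∈ rankOneCone (seg G 1) := by
  obtain ⟨p, q, hp, hq, rfl⟩ := exists_nonneg_eq_vecMulVec_add_vecMulVec hS h₀₁
  have hseg := segment_subset_seg (1 : Matrix (Fin t) (Fin t) ℝ) hij
  rw [one_apply_eq_single, one_apply_eq_single] at hseg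
  rw [iota_eq_congruence, map_add, ← iota_eq_congruence, ← iota_eq_congruence,
    iota_vecMulVec_self, iota_vecMulVec_self]
  exact add_mem (vecMulVec_self_mem_rankOneCone_of_segment_subset hseg (hp 0) (hp 1))
    (vecMulVec_self_mem_rankOneCone_of_segment_subset hseg (hq 0) (hq 1))

lemma rankOneCone_seg_one (G : SimpleGraph (Fin t)) :
    rankOneCone (seg G 1) = SDDGplusCone G := by
  refine le_antisymm (Submodule.span_le.mpr ?_) ?_
  · rintro _ ⟨v, hv, rfl⟩
    exact vecMulVec_self_mem_SDDGplus hv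
  · rintro _ ⟨⟨S, hS, rfl⟩, -, hnn⟩
    refine sum_mem fun i _ => sum_mem fun j _ => ?_
    split_ifs with h
    · exact iota_mem_rankOneCone_seg_one h.2 (hS i j) (sum_iota_apply S h.1 h.2 ▸ hnn i j)
    · exact zero_mem _

lemma SDDGplusU_eq_rankOneCone_seg (G : SimpleGraph (Fin t)) (U : Matrix (Fin t) (Fin n) ℝ) :
    SDDGplusU G U = rankOneCone (seg G U) := by
  have himage : (· ᵥ* U) '' seg G 1 = seg G U := by rw [image_vecMul_seg, Matrix.one_mul]
  rw [← himage, ← map_congruence_rankOneCone, rankOneCone_seg_one]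
  ext X
  simp only [SDDGplusU, eq_comm, mem_ofPred_eq, SetLike.mem_coe, PointedCone.mem_map,
    mem_SDDGplusCone, congruence_apply]

end ScaledDiagonallyDominant

theorem SDDGplusU_eq_iff_seg_eq_general {t t' n : ℕ}
    (G : SimpleGraph (Fin t)) (G' : SimpleGraph (Fin t'))
    (U : Matrix (Fin t) (Fin n) ℝ) (U' : Matrix (Fin t') (Fin n) ℝ)
    (c : Fin n → ℝ) (hU : U *ᵥ c = 1) (hU' : U' *ᵥ c = 1) :
    SDDGplusU G U = SDDGplusU G' U' ↔ seg G U = seg G' U' := by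
  rw [SDDGplusU_eq_rankOneCone_seg, SDDGplusU_eq_rankOneCone_seg, SetLike.coe_set_eq]
  exact rankOneCone_inj (fun _ => dotProduct_eq_one_of_mem_seg hU)
    fun _ => dotProduct_eq_one_of_mem_seg hU'

/-- `SDD^G₊(U) = SDD^{G'}₊(U')` if and only if `seg(G,U) = seg(G',U')`. -/
theorem SDDGplusU_eq_iff_seg_eq {t t' n : ℕ}
    (G : SimpleGraph (Fin t)) (G' : SimpleGraph (Fin t'))
    (U : Matrix (Fin t) (Fin n) ℝ) (U' : Matrix (Fin t') (Fin n) ℝ)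
    (hU : ∀ i j, 0 ≤ U i j) (hUrow : ∀ i, ∑ j, U i j = 1)
    (hU' : ∀ i j, 0 ≤ U' i j) (hU'row : ∀ i, ∑ j, U' i j = 1) :
    SDDGplusU G U = SDDGplusU G' U' ↔ seg G U = seg G' U' := by
  exact SDDGplusU_eq_iff_seg_eq_general G G' U U' 1
    (by simpa [funext_iff, mulVec, dotProduct] using hUrow)
    (by simpa [funext_iff, mulVec, dotProduct] using hU'row)

end
end
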